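/- Intertwining relation: let n ≥ 1, t > 0, let x ∈ W^{n+1} have strictly increasing coordinates, let (x',y') ∈ W^{n+1,n} with x' having strictly increasing coordinates and y' having strictly increasing coordinates. Then ∫_{W^n(x)} λ^n(x,y) q^{n,+}_t((x,y),(x',y')) dy = p^{n+1,+}_t(x,x') λ^n(x',y'), where the integrand is interpreted via the division-free identity λ^n(x,y) q^{n,+}_t((x,y),(x',y')) = n! (h_n(y')/h_{n+1}(x)) q^n_t((x,y),(x',y')). -/

import Mathlib

open MeasureTheory Real

/-- The centered Gaussian density with variance `t`. -/
noncomputable def gauss (t y : ℝ) : ℝ :=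
  (Real.sqrt (2 * Real.pi * t))⁻¹ * Real.exp (-y ^ 2 / (2 * t))

/-- The Gaussian cumulative distribution function `Φ_t`. -/
noncomputable def gaussCDF (t y : ℝ) : ℝ := ∫ z in Set.Iic y, gauss t z

/-- The derivative `φ'_t` of the Gaussian density. -/
noncomputable def gaussDeriv (t y : ℝ) : ℝ :=
  -y / Real.sqrt (2 * Real.pi * t ^ 3) * Real.exp (-y ^ 2 / (2 * t))

/-- The kernel `q^n_t((x,y),(x',y'))`, a `(2n+1)×(2n+1)` block determinant. -/
noncomputable def qKer (n : ℕ) (t : ℝ) (x x' : Fin (n + 1) → ℝ) (y y' : Fin n → ℝ) : ℝ :=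
  Matrix.det (Matrix.fromBlocks
    (Matrix.of fun i j : Fin (n + 1) => gauss t (x' j - x i))
    (Matrix.of fun (i : Fin (n + 1)) (j : Fin n) =>
      gaussCDF t (y' j - x i) - (if (i : ℕ) ≤ (j : ℕ) then (1 : ℝ) else 0))
    (Matrix.of fun (i : Fin n) (j : Fin (n + 1)) => gaussDeriv t (x' j - y i))
    (Matrix.of fun i j : Fin n => gauss t (y' j - y i)))

/-- The Karlin–McGregor kernel `p^m_t(x,x') = det{φ_t(x'_j − x_i)}`. -/
noncomputable def pKer (m : ℕ) (t : ℝ) (x x' : Fin m → ℝ) : ℝ :=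
  Matrix.det (Matrix.of fun i j : Fin m => gauss t (x' j - x i))

/-- The interlacing region `W^n(x) = {y : x_1 ≤ y_1 ≤ x_2 ≤ … ≤ y_n ≤ x_{n+1}}`. -/
def WintAt (n : ℕ) (x : Fin (n + 1) → ℝ) : Set (Fin n → ℝ) :=
  {y | ∀ i : Fin n, x i.castSucc ≤ y i ∧ y i ≤ x i.succ}

/-- The Vandermonde product `h_m(z) = ∏_{i<j} (z_j − z_i)`. -/
noncomputable def vand (m : ℕ) (z : Fin m → ℝ) : ℝ :=
  ∏ j : Fin m, ∏ i ∈ Finset.Iio j, (z j - z i)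


lemma gauss_hasDerivAt (t : ℝ) (ht : 0 < t) (y : ℝ) :
    HasDerivAt (gauss t) (gaussDeriv t y) y := by
  have h1 : HasDerivAt (fun y : ℝ => -y ^ 2 / (2 * t)) (-(2 * y) / (2 * t)) y := by
    have := ((hasDerivAt_pow 2 y).neg).div_const (2 * t)
    simpa using this
  have h2 := (h1.exp).const_mul (Real.sqrt (2 * Real.pi * t))⁻¹
  have h3 : Real.sqrt (2 * Real.pi * t ^ 3) = t * Real.sqrt (2 * Real.pi * t) := by
    rw [show 2 * Real.pi * t ^ 3 = t ^ 2 * (2 * Real.pi * t) by ring,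
      Real.sqrt_mul (by positivity), Real.sqrt_sq ht.le]
  have h4 : Real.sqrt (2 * Real.pi * t) ≠ 0 := by positivity
  have h5 : gaussDeriv t y = (Real.sqrt (2 * Real.pi * t))⁻¹ *
      (Real.exp (-y ^ 2 / (2 * t)) * (-(2 * y) / (2 * t))) := by
    unfold gaussDeriv
    rw [h3]
    field_simp
  rw [h5]
  exact h2

lemma gauss_cont (t : ℝ) : Continuous (gauss t) := by unfold gauss; fun_prop

lemma gaussDeriv_cont (t : ℝ) : Continuous (gaussDeriv t) := by unfold gaussDeriv; fun_prop

lemma gauss_integrable (t : ℝ) (ht : 0 < t) : Integrable (gauss t) := by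
  have := (integrable_exp_neg_mul_sq (b := 1 / (2 * t)) (by positivity)).const_mul
    (Real.sqrt (2 * Real.pi * t))⁻¹
  convert this using 2 with y
  unfold gauss
  congr 2
  ring

lemma int_deriv (t : ℝ) (ht : 0 < t) (c a b : ℝ) (hab : a ≤ b) :
    ∫ y in Set.Icc a b, gaussDeriv t (c - y) = gauss t (c - a) - gauss t (c - b) := by
  rw [integral_Icc_eq_integral_Ioc, ← intervalIntegral.integral_of_le hab,
    intervalIntegral.integral_comp_sub_left (fun y => gaussDeriv t y) c]
  exact intervalIntegral.integral_eq_sub_of_hasDerivAt (fun y _ => gauss_hasDerivAt t ht y)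
    ((gaussDeriv_cont t).intervalIntegrable _ _)

lemma int_gauss (t : ℝ) (ht : 0 < t) (c a b : ℝ) (hab : a ≤ b) :
    ∫ y in Set.Icc a b, gauss t (c - y) = gaussCDF t (c - a) - gaussCDF t (c - b) := by
  rw [integral_Icc_eq_integral_Ioc, ← intervalIntegral.integral_of_le hab,
    intervalIntegral.integral_comp_sub_left (fun y => gauss t y) c]
  exact (intervalIntegral.integral_Iic_sub_Iic (gauss_integrable t ht).integrableOn
    (gauss_integrable t ht).integrableOn).symm

lemma det_int (n : ℕ) (A : Matrix (Fin (n + 1)) (Fin (n + 1)) ℝ)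
    (B : Matrix (Fin (n + 1)) (Fin n) ℝ)
    (s : Fin n → Set ℝ)
    (c : Fin (n + 1) → ℝ → ℝ) (d : Fin n → ℝ → ℝ)
    (hc : ∀ i j, IntegrableOn (c j) (s i)) (hd : ∀ i j, IntegrableOn (d j) (s i)) :
    ∫ y in Set.univ.pi s, Matrix.det (Matrix.fromBlocks A B
        (Matrix.of fun (i : Fin n) j => c j (y i)) (Matrix.of fun i j => d j (y i)))
      = Matrix.det (Matrix.fromBlocks A B
        (Matrix.of fun (i : Fin n) j => ∫ z in s i, c j z)
        (Matrix.of fun i j => ∫ z in s i, d j z)) := by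
  have key : ∀ (σ : Equiv.Perm (Fin (n + 1) ⊕ Fin n)) (i : Fin n),
      IntegrableOn (fun z => Sum.elim (fun j => c j z) (fun j => d j z) (σ (Sum.inr i))) (s i) := by
    intro σ i
    cases σ (Sum.inr i) with
    | inl j => exact hc i j
    | inr j => exact hd i j
  rw [volume_pi, Measure.restrict_pi_pi]
  simp only [← Matrix.det_transpose (Matrix.fromBlocks _ _ _ _)]
  simp only [Matrix.det_apply', Fintype.prod_sum_type, Matrix.transpose_apply]
  have hr : ∀ (y : Fin n → ℝ) (k : Fin (n + 1) ⊕ Fin n) (i : Fin n),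
      Matrix.fromBlocks A B (Matrix.of fun (i : Fin n) j => c j (y i))
        (Matrix.of fun i j => d j (y i)) (Sum.inr i) k
      = Sum.elim (fun j => c j (y i)) (fun j => d j (y i)) k := by
    intro y k i; cases k <;> rfl
  have hl : ∀ (C : Matrix (Fin n) (Fin (n + 1)) ℝ) (D : Matrix (Fin n) (Fin n) ℝ) k
      (i : Fin (n + 1)),
      Matrix.fromBlocks A B C D (Sum.inl i) k = Sum.elim (A i) (B i) k := by
    intro _ _ k i; cases k <;> rfl
  have hr' : ∀ (k : Fin (n + 1) ⊕ Fin n) (i : Fin n),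
      Matrix.fromBlocks A B (Matrix.of fun (i : Fin n) j => ∫ z in s i, c j z)
        (Matrix.of fun i j => ∫ z in s i, d j z) (Sum.inr i) k
      = ∫ z in s i, Sum.elim (fun j => c j z) (fun j => d j z) k := by
    intro k i; cases k <;> rfl
  simp only [hr, hr', hl]
  rw [integral_finsetSum]
  · refine Finset.sum_congr rfl fun σ _ => ?_
    rw [integral_const_mul, integral_const_mul]
    congr 2
    exact integral_fintype_prod_eq_prod
      (fun i z => Sum.elim (fun j => c j z) (fun j => d j z) (σ (Sum.inr i)))
  · intro σ _
    refine Integrable.const_mul (Integrable.const_mul ?_ _) _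
    exact Integrable.fintype_prod (fun i => key σ i)

lemma det_alg (n : ℕ) (A : Matrix (Fin (n + 1)) (Fin (n + 1)) ℝ)
    (F : Matrix (Fin (n + 1)) (Fin n) ℝ) :
    Matrix.det (Matrix.fromBlocks A
      (Matrix.of fun (i : Fin (n + 1)) (j : Fin n) =>
        F i j - (if (i : ℕ) ≤ (j : ℕ) then (1 : ℝ) else 0))
      (Matrix.of fun (i : Fin n) j => A i.castSucc j - A i.succ j)
      (Matrix.of fun (i : Fin n) j => F i.castSucc j - F i.succ j)) = A.det := by
  set B : Matrix (Fin (n + 1)) (Fin n) ℝ := Matrix.of fun i j =>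
        F i j - (if (i : ℕ) ≤ (j : ℕ) then (1 : ℝ) else 0) with hB
  set L : Matrix (Fin n) (Fin (n + 1)) ℝ := Matrix.of fun i k =>
    (if k = i.castSucc then 1 else 0) - (if k = i.succ then 1 else 0) with hL
  have hmul : ∀ (m : ℕ) (X : Matrix (Fin (n + 1)) (Fin m) ℝ) i j,
      (L * X) i j = X i.castSucc j - X i.succ j := by
    intro m X i j
    simp [hL, Matrix.mul_apply, sub_mul, Finset.sum_sub_distrib]
  have h : Matrix.fromBlocks A B
      (Matrix.of fun (i : Fin n) j => A i.castSucc j - A i.succ j)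
      (Matrix.of fun (i : Fin n) j => F i.castSucc j - F i.succ j)
      = Matrix.fromBlocks 1 0 L 1 * Matrix.fromBlocks A B 0 1 := by
    rw [Matrix.fromBlocks_multiply]
    congr 1
    · simp
    · simp
    · ext i j; simp [hmul]
    · ext i j
      simp only [Matrix.mul_one, Matrix.add_apply, hmul, Matrix.of_apply, hB, Fin.val_castSucc,
        Fin.val_succ, Matrix.one_apply, Fin.ext_iff]
      split_ifs <;> first | omega | ring
  rw [h, Matrix.det_mul, Matrix.det_fromBlocks_zero₁₂, Matrix.det_fromBlocks_zero₂₁]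
  simp

/-- Intertwining relation:
`∫_{W^n(x)} λ^n(x,y) q^{n,+}_t((x,y),(x',y')) dy = p^{n+1,+}_t(x,x') λ^n(x',y')`,
with the integrand written in the division-free form
`n! (h_n(y')/h_{n+1}(x)) q^n_t((x,y),(x',y'))`. -/
theorem stmt6 (n : ℕ) (hn : 1 ≤ n) (t : ℝ) (ht : 0 < t)
    (x x' : Fin (n + 1) → ℝ) (y' : Fin n → ℝ)
    (hx : StrictMono x) (hx' : StrictMono x') (hy' : StrictMono y')
    (hx'y' : ∀ i : Fin n, x' i.castSucc ≤ y' i ∧ y' i ≤ x' i.succ) :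
    ∫ y in WintAt n x,
        (Nat.factorial n : ℝ) * (vand n y' / vand (n + 1) x) * qKer n t x x' y y'
      = (vand (n + 1) x' / vand (n + 1) x) * pKer (n + 1) t x x'
        * ((Nat.factorial n : ℝ) * vand n y' / vand (n + 1) x') := by
  have hW : WintAt n x = Set.univ.pi fun i : Fin n => Set.Icc (x i.castSucc) (x i.succ) := by
    ext y; simp only [WintAt, Set.mem_pi, Set.mem_setOf_eq, Set.mem_univ, Set.mem_Icc, true_imp_iff]
  have hle : ∀ i : Fin n, x i.castSucc ≤ x i.succ := fun i => (hx i.castSucc_lt_succ).le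
  have hq : ∫ y in WintAt n x, qKer n t x x' y y' = pKer (n + 1) t x x' := by
    unfold qKer pKer
    rw [hW, det_int n _ _ _ (fun j z => gaussDeriv t (x' j - z)) (fun j z => gauss t (y' j - z))]
    · rw [← det_alg n _ (Matrix.of fun i j => gaussCDF t (y' j - x i))]
      simp only [int_deriv t ht _ _ _ (hle _), int_gauss t ht _ _ _ (hle _), Matrix.of_apply]
    · intro i j
      exact ((gaussDeriv_cont t).comp (continuous_const.sub continuous_id)).integrableOn_Icc
    · intro i j
      exact ((gauss_cont t).comp (continuous_const.sub continuous_id)).integrableOn_Icc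
  have hv : vand (n + 1) x' ≠ 0 := by
    unfold vand
    refine Finset.prod_ne_zero_iff.2 fun j _ => Finset.prod_ne_zero_iff.2 fun i hi => ?_
    exact (sub_pos.2 (hx' (Finset.mem_Iio.1 hi))).ne'
  rw [integral_const_mul, hq]
  field_simp
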